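/- arXiv:1911.03948 — 7 statements merged into one kernel-verified Lean document; each statement's English description precedes it below -/
import Mathlib

section
/- If X and Y are homotopy-equivalent path-connected topological spaces, then SC_n(X) = SC_n(Y) for every n ∈ ℕ₀. -/
/-!
If `g : Y → X` has a homotopy left inverse `f : X → Y`, i.e. `H : f ∘ g ≃ id_Y`, then
`SC n Y ≤ SC n X`; a homotopy equivalence gives this inequality in both directions.

An open filling domain `A ⊆ S_nX` with filling `s` is pulled back to the open set of those
`γ ∈ S_nY` with `g ∘ γ ∈ A`. On it, `f ∘ s(g ∘ γ)` fills `f ∘ g ∘ γ` rather than `γ`, so this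
ball is shrunk to radius `1/2` and the collar `1/2 ≤ ‖x‖ ≤ 1` is used to run the homotopy `H`
from `f ∘ g ∘ γ` to `γ` along the rays (`collarFill`). The glued map is continuous jointly in
`γ` and `x`, hence, by currying, gives a continuous filling of the pulled-back set. Pulling
back preserves covers, so every cover of `S_nX` yields one of `S_nY` of the same size.
-/

open Metric Set ContinuousMap
open scoped RealInnerProductSpace

noncomputable section

universe u

/-- The unit sphere `Sⁿ` in `ℝ^{n+1}`. -/
abbrev Sph (n : ℕ) : Set (EuclideanSpace ℝ (Fin (n + 1))) := Metric.sphere 0 1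

/-- The closed unit ball `B^{n+1}` in `ℝ^{n+1}`. -/
abbrev Ball (n : ℕ) : Set (EuclideanSpace ℝ (Fin (n + 1))) := Metric.closedBall 0 1

/-- `S_nX`: the space of nullhomotopic continuous maps `Sⁿ → X`, with the compact-open
topology (as a subspace of `C(Sⁿ, X)`). -/
abbrev SphereMaps (n : ℕ) (X : Type*) [TopologicalSpace X] : Type _ :=
  {f : C(↥(Sph n), X) // ∃ x : X, f.Homotopic (ContinuousMap.const _ x)}

/-- `B_{n+1}X`: the space of continuous maps `B^{n+1} → X` with the compact-open topology. -/
abbrev BallMaps (n : ℕ) (X : Type*) [TopologicalSpace X] : Type _ := C(↥(Ball n), X)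

/-- The inclusion `Sⁿ ↪ B^{n+1}`. -/
def sphIncl (n : ℕ) : C(↥(Sph n), ↥(Ball n)) :=
  ⟨fun p => ⟨p.1, sphere_subset_closedBall p.2⟩, (continuous_subtype_val.subtype_mk _)⟩

/-- A sphere filling over `A ⊆ S_nX`: a continuous map `s : A → B_{n+1}X` with
`s(γ)|_{Sⁿ} = γ` for all `γ ∈ A`. -/
def IsSphereFilling {n : ℕ} {X : Type*} [TopologicalSpace X]
    (A : Set (SphereMaps n X)) (s : C(↥A, BallMaps n X)) : Prop :=
  ∀ γ : ↥A, (s γ).comp (sphIncl n) = (γ : SphereMaps n X).1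

/-- A subset `A ⊆ S_nX` is a sphere filling domain if a sphere filling over `A` exists. -/
def IsFillingDomain {n : ℕ} {X : Type*} [TopologicalSpace X] (A : Set (SphereMaps n X)) : Prop :=
  ∃ s : C(↥A, BallMaps n X), IsSphereFilling A s

/-- The `n`-spherical complexity `SC_n(X)`: the minimal number of open sphere filling
domains needed to cover `S_nX` (`⊤` if no finite cover exists). -/
def SC (n : ℕ) (X : Type*) [TopologicalSpace X] : ℕ∞ :=
  sInf {k : ℕ∞ | ∃ m : ℕ, k = m ∧ ∃ U : Fin m → Set (SphereMaps n X),
    (∀ i, IsOpen (U i) ∧ IsFillingDomain (U i)) ∧ (⋃ i, U i) = univ}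

/-- Postcomposition with `g : Y → X`, as a continuous map `S_nY → S_nX`. -/
def sphereMapsPost {X Y : Type*} [TopologicalSpace X] [TopologicalSpace Y] (n : ℕ)
    (g : C(Y, X)) : C(SphereMaps n Y, SphereMaps n X) where
  toFun γ := ⟨g.comp γ.1, by
    obtain ⟨y, hy⟩ := γ.2
    exact ⟨g y, (ContinuousMap.Homotopic.refl g).comp hy⟩⟩
  continuous_toFun :=
    ((ContinuousMap.continuous_postcomp g).comp continuous_subtype_val).subtype_mk _

/-- The map `x ↦ x / max (1/2) ‖x‖` of the ball to itself: it doubles the ball of radius `1/2`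
and retracts the collar `1/2 ≤ ‖x‖` radially onto the sphere. -/
def radialExpand (n : ℕ) : C(↥(Ball n), ↥(Ball n)) where
  toFun x := ⟨(max (1 / 2) ‖x.1‖)⁻¹ • x.1, by
    have hpos : (0 : ℝ) < max (1 / 2) ‖x.1‖ := lt_max_of_lt_left (by norm_num)
    rw [mem_closedBall_zero_iff, norm_smul, norm_inv, Real.norm_of_nonneg hpos.le,
      inv_mul_le_iff₀ hpos, mul_one]
    exact le_max_right _ _⟩
  continuous_toFun := by
    have hmax : Continuous fun x : ↥(Ball n) => max (1 / 2) ‖x.1‖ := by fun_prop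
    exact ((hmax.inv₀ fun x => (lt_max_of_lt_left (by norm_num)).ne').smul
      continuous_subtype_val).subtype_mk _

lemma norm_radialExpand {n : ℕ} {x : ↥(Ball n)} (hx : 1 / 2 ≤ ‖x.1‖) :
    ‖(radialExpand n x).1‖ = 1 := by
  have hpos : (0 : ℝ) < ‖x.1‖ := lt_of_lt_of_le (by norm_num) hx
  change ‖(max (1 / 2) ‖x.1‖)⁻¹ • x.1‖ = 1
  rw [max_eq_right hx, norm_smul, norm_inv, norm_norm, inv_mul_cancel₀ hpos.ne']

/-- The radial retraction of the collar `1/2 ≤ ‖x‖` onto the sphere, with an irrelevant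
constant value on the rest of the ball. -/
def toSph (n : ℕ) (x : ↥(Ball n)) : ↥(Sph n) :=
  if hx : 1 / 2 ≤ ‖x.1‖ then
    ⟨(radialExpand n x).1, mem_sphere_zero_iff_norm.2 (norm_radialExpand hx)⟩
  else ⟨EuclideanSpace.single 0 1, by simp⟩

lemma sphIncl_toSph {n : ℕ} {x : ↥(Ball n)} (hx : 1 / 2 ≤ ‖x.1‖) :
    sphIncl n (toSph n x) = radialExpand n x := by
  apply Subtype.ext
  simp only [sphIncl, ContinuousMap.coe_mk, toSph, dif_pos hx]

lemma continuousOn_toSph (n : ℕ) : ContinuousOn (toSph n) {x | 1 / 2 ≤ ‖x.1‖} := by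
  rw [Topology.IsInducing.subtypeVal.continuousOn_iff]
  refine ContinuousOn.congr
    (f := fun x => (radialExpand n x).1)
    (continuous_subtype_val.comp (radialExpand n).continuous).continuousOn fun x hx => ?_
  exact congrArg Subtype.val (sphIncl_toSph hx)

lemma norm_sphIncl {n : ℕ} (p : ↥(Sph n)) : ‖(sphIncl n p).1‖ = 1 :=
  mem_sphere_zero_iff_norm.1 p.2

lemma toSph_sphIncl {n : ℕ} (p : ↥(Sph n)) : toSph n (sphIncl n p) = p := by
  have hp := norm_sphIncl p
  have hx : 1 / 2 ≤ ‖(sphIncl n p).1‖ := by rw [hp]; norm_num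
  apply Subtype.ext
  refine (congrArg Subtype.val (sphIncl_toSph hx)).trans ?_
  change (max (1 / 2) ‖(sphIncl n p).1‖)⁻¹ • (sphIncl n p).1 = p.1
  rw [max_eq_right hx, hp, inv_one, one_smul]
  rfl

/-- Given `β : B^{n+1} → Y` and `γ : Sⁿ → Y`, the map that is `β` rescaled on the ball of radius
`1/2` and the track of the points of `γ` under the homotopy `H : f₀ ≃ id` on the collar. -/
def collarFill {Y : Type*} [TopologicalSpace Y] {n : ℕ} {f₀ : C(Y, Y)}
    (H : f₀.Homotopy (ContinuousMap.id Y)) (β : BallMaps n Y) (γ : C(↥(Sph n), Y))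
    (x : ↥(Ball n)) : Y :=
  if ‖x.1‖ ≤ 1 / 2 then β (radialExpand n x)
  else H (Set.projIcc 0 1 zero_le_one (2 * ‖x.1‖ - 1), γ (toSph n x))

/-- The two pieces of `collarFill` glue to a jointly continuous map, provided `β` restricts to
`f₀ ∘ γ` on the sphere. -/
lemma continuous_collarFill {A Y : Type*} [TopologicalSpace A] [TopologicalSpace Y] {n : ℕ}
    {f₀ : C(Y, Y)} (H : f₀.Homotopy (ContinuousMap.id Y)) {β : A → BallMaps n Y}
    {γ : A → C(↥(Sph n), Y)} (hβ : Continuous β) (hγ : Continuous γ)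
    (hβγ : ∀ a, (β a).comp (sphIncl n) = f₀.comp (γ a)) :
    Continuous fun p : A × ↥(Ball n) => collarFill H (β p.1) (γ p.1) p.2 := by
  unfold collarFill
  refine continuous_if_le (by fun_prop) continuous_const ?_ ?_ ?_
  · exact Continuous.continuousOn (by fun_prop)
  · have hP : ContinuousOn (fun p : A × ↥(Ball n) => toSph n p.2)
        {p | 1 / 2 ≤ ‖p.2.1‖} :=
      (continuousOn_toSph n).comp continuousOn_snd fun _ hp => hp
    have hγP : ContinuousOn (fun p : A × ↥(Ball n) => γ p.1 (toSph n p.2))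
        {p | 1 / 2 ≤ ‖p.2.1‖} :=
      (ContinuousEval.continuous_eval (F := C(↥(Sph n), Y))).comp_continuousOn
        ((hγ.comp continuous_fst).continuousOn.prodMk hP)
    refine H.continuous.comp_continuousOn (ContinuousOn.prodMk ?_ hγP)
    exact (continuous_projIcc.comp (by fun_prop)).continuousOn
  · rintro ⟨a, x⟩ hx
    have hx' : ‖x.1‖ = 1 / 2 := hx
    have ht : Set.projIcc (0 : ℝ) 1 zero_le_one (2 * ‖x.1‖ - 1) = 0 := by
      rw [hx', Set.projIcc_of_le_left] <;> norm_num
    have key := DFunLike.congr_fun (hβγ a) (toSph n x)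
    simp only [ContinuousMap.comp_apply, sphIncl_toSph hx'.ge] at key
    simp only [ht, H.apply_zero, key]

lemma collarFill_sphIncl {Y : Type*} [TopologicalSpace Y] {n : ℕ} {f₀ : C(Y, Y)}
    (H : f₀.Homotopy (ContinuousMap.id Y)) (β : BallMaps n Y) (γ : C(↥(Sph n), Y))
    (p : ↥(Sph n)) : collarFill H β γ (sphIncl n p) = γ p := by
  have ht : Set.projIcc (0 : ℝ) 1 zero_le_one (2 * 1 - 1) = 1 := by
    rw [Set.projIcc_of_right_le] <;> norm_num
  rw [collarFill, norm_sphIncl, if_neg (by norm_num), toSph_sphIncl, ht, H.apply_one]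
  rfl

lemma IsFillingDomain.preimage {X Y : Type*} [TopologicalSpace X] [TopologicalSpace Y] {n : ℕ}
    (f : C(X, Y)) (g : C(Y, X)) (H : (f.comp g).Homotopy (ContinuousMap.id Y))
    {A : Set (SphereMaps n X)} (hA : IsFillingDomain A) :
    IsFillingDomain (sphereMapsPost n g ⁻¹' A) := by
  obtain ⟨s, hs⟩ := hA
  let G : ↥(sphereMapsPost n g ⁻¹' A) → ↥A := fun γ => ⟨sphereMapsPost n g γ.1, γ.2⟩
  have hG : Continuous G :=
    ((sphereMapsPost n g).continuous.comp continuous_subtype_val).subtype_mk _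
  have hc := continuous_collarFill H (A := ↥(sphereMapsPost n g ⁻¹' A))
    (β := fun γ => f.comp (s (G γ))) (γ := fun γ => γ.1.1)
    ((ContinuousMap.continuous_postcomp f).comp (s.continuous.comp hG))
    (continuous_subtype_val.comp continuous_subtype_val)
    (fun γ => by rw [ContinuousMap.comp_assoc, hs (G γ)]; rfl)
  refine ⟨ContinuousMap.curry ⟨_, hc⟩, fun γ => ?_⟩
  ext p
  exact collarFill_sphIncl H _ _ p

lemma SC_le_of_homotopy {X Y : Type*} [TopologicalSpace X] [TopologicalSpace Y] (n : ℕ)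
    (f : C(X, Y)) (g : C(Y, X)) (H : (f.comp g).Homotopy (ContinuousMap.id Y)) :
    SC n Y ≤ SC n X := by
  refine sInf_le_sInf ?_
  rintro k ⟨m, rfl, U, hU, hcover⟩
  refine ⟨m, rfl, fun i => sphereMapsPost n g ⁻¹' U i, fun i =>
    ⟨(hU i).1.preimage (sphereMapsPost n g).continuous, (hU i).2.preimage f g H⟩, ?_⟩
  rw [← Set.preimage_iUnion, hcover, Set.preimage_univ]

/-- homotopy-equivalent path-connected spaces have equal `n`-spherical
complexities. -/
theorem SC_homotopy_invariant {X : Type*} {Y : Type*} [TopologicalSpace X] [TopologicalSpace Y]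
    [PathConnectedSpace X] [PathConnectedSpace Y]
    (h : ContinuousMap.HomotopyEquiv X Y) (n : ℕ) :
    SC n X = SC n Y := by
  exact le_antisymm (SC_le_of_homotopy n h.invFun h.toFun h.left_inv.some)
    (SC_le_of_homotopy n h.toFun h.invFun h.right_inv.some)

end
end

section
/- Let X be a path-connected Hausdorff space, n ∈ ℕ₀ and A ⊆ S_nX. Then A is a sphere filling domain if and only if the inclusion map A ↪ S_nX is homotopic to a continuous map with values in c_n(X). -/
/-!
A filling `s` over `A` contracts each `γ ∈ A` radially inside its ball `s γ`: the map
`(t, γ) ↦ (p ↦ s γ ((1 - t) p))` is a homotopy from the inclusion of `A` to the constant maps with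
values `s γ 0`. Conversely, let `H` be a homotopy from the inclusion to a map into the constants.
The polar-coordinate map `A × (I × Sⁿ) → A × B^{n+1}`, `(γ, t, p) ↦ (γ, (1 - t) p)`, is proper and
surjective because `I × Sⁿ` is compact, hence it is a quotient map (`polarProd_isQuotientMap`).
The map `(γ, t, p) ↦ H (t, γ) p` is constant on its fibres, because `H (1, γ)` is a constant map,
so it descends to a continuous map `A × B^{n+1} → X`, whose currying is a filling.
-/

open Metric Set ContinuousMap
open scoped RealInnerProductSpace

noncomputable section

universe u

/-- `c_n : X → S_nX`, the embedding of `X` as the constant maps. -/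
def constSph (n : ℕ) (X : Type*) [TopologicalSpace X] (x : X) : SphereMaps n X :=
  ⟨ContinuousMap.const _ x, ⟨x, ContinuousMap.Homotopic.refl _⟩⟩

/-- The inclusion map of a subset, as a continuous map. -/
def inclC {Y : Type*} [TopologicalSpace Y] (U : Set Y) : C(↥U, Y) :=
  ⟨Subtype.val, continuous_subtype_val⟩

/-- Polar coordinates on the ball, with reversed radius: `(t, p) ↦ (1 - t) p`. -/
def polar (n : ℕ) : C(unitInterval × ↥(Sph n), ↥(Ball n)) where
  toFun q := ⟨(1 - (q.1 : ℝ)) • (q.2 : EuclideanSpace ℝ (Fin (n + 1))), by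
    have h1 := q.1.2.1
    have h2 := q.1.2.2
    have h3 : ‖(q.2 : EuclideanSpace ℝ (Fin (n + 1)))‖ = 1 := by simp
    rw [mem_closedBall_zero_iff, norm_smul, h3, Real.norm_eq_abs, abs_of_nonneg (by linarith)]
    linarith⟩
  continuous_toFun := by fun_prop

lemma polar_coe (n : ℕ) (t : unitInterval) (p : ↥(Sph n)) :
    (polar n (t, p) : EuclideanSpace ℝ (Fin (n + 1))) = (1 - (t : ℝ)) • p.1 := rfl

lemma polar_zero (n : ℕ) (p : ↥(Sph n)) : polar n (0, p) = sphIncl n p :=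
  Subtype.ext (by simp [polar_coe, sphIncl])

lemma polar_one (n : ℕ) (p : ↥(Sph n)) : polar n (1, p) = ⟨0, by simp⟩ :=
  Subtype.ext (by simp [polar_coe])

lemma polar_surjective (n : ℕ) : Function.Surjective (polar n) := by
  intro x
  have hx : ‖x.1‖ ≤ 1 := mem_closedBall_zero_iff.1 x.2
  by_cases h0 : x.1 = 0
  · obtain ⟨p, hp⟩ := (NormedSpace.sphere_nonempty (E := EuclideanSpace ℝ (Fin (n + 1)))
      (x := 0) (r := 1)).2 zero_le_one
    exact ⟨(1, ⟨p, hp⟩), Subtype.ext (by simp [polar_coe, h0])⟩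
  · have hn : ‖x.1‖ ≠ 0 := norm_ne_zero_iff.2 h0
    refine ⟨(⟨1 - ‖x.1‖, by linarith, by linarith [norm_nonneg x.1]⟩,
      ⟨‖x.1‖⁻¹ • x.1, by simp [norm_smul, hn]⟩), Subtype.ext ?_⟩
    simp [polar_coe, smul_smul, hn]

/-- Polar coordinates are unique except at the centre of the ball. -/
lemma polar_eq {n : ℕ} {t t' : unitInterval} {p p' : ↥(Sph n)}
    (h : polar n (t, p) = polar n (t', p')) : t = t' ∧ (t = 1 ∨ p = p') := by
  have h' : (1 - (t : ℝ)) • p.1 = (1 - (t' : ℝ)) • p'.1 := congrArg Subtype.val h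
  have ht : t = t' := by
    have hn := congrArg norm h'
    have hp : ‖p.1‖ = 1 := by simp
    have hp' : ‖p'.1‖ = 1 := by simp
    rw [norm_smul, norm_smul, hp, hp', Real.norm_eq_abs, Real.norm_eq_abs,
      abs_of_nonneg (by linarith [t.2.2]), abs_of_nonneg (by linarith [t'.2.2])] at hn
    exact Subtype.ext (by linarith)
  subst ht
  refine ⟨rfl, ?_⟩
  by_cases h1 : t = 1
  · exact Or.inl h1
  · have h2 : (1 - (t : ℝ)) ≠ 0 := fun h => h1 (Subtype.ext (sub_eq_zero.1 h).symm)
    exact Or.inr (Subtype.ext (smul_right_injective _ h2 h'))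

/-- Multiplying by an arbitrary space `Y` keeps `polar` a quotient map, since it is proper. -/
lemma polarProd_isQuotientMap (n : ℕ) (Y : Type*) [TopologicalSpace Y] :
    Topology.IsQuotientMap ((ContinuousMap.id Y).prodMap (polar n)) := by
  have hp : IsProperMap (Prod.map (id : Y → Y) (polar n)) :=
    isProperMap_id.prodMap (polar n).continuous.isProperMap
  exact hp.isClosedMap.isQuotientMap hp.continuous
    (Function.surjective_id.prodMap (polar_surjective n))

/-- The restriction of a map on the ball to the concentric sphere of radius `1 - t`,
as a nullhomotopic map; its nullhomotopy shrinks the sphere to the centre. -/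
def shrink {n : ℕ} {X : Type*} [TopologicalSpace X] (f : BallMaps n X) (t : unitInterval) :
    SphereMaps n X :=
  ⟨f.comp ((polar n).comp ((ContinuousMap.const _ t).prodMk (ContinuousMap.id _))),
    f ⟨0, by simp⟩,
    ⟨{ toFun := fun q =>
         f (polar n (unitInterval.symm (unitInterval.symm q.1 * unitInterval.symm t), q.2))
       continuous_toFun := by fun_prop
       map_zero_left := fun p => by simp
       map_one_left := fun p => by simp [polar_one] }⟩⟩

/-- `A ⊆ S_nX` is a sphere filling domain iff the inclusion `A ↪ S_nX` is
homotopic to a continuous map with values in `c_n(X)`. -/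
theorem isFillingDomain_iff {X : Type*} [TopologicalSpace X] [PathConnectedSpace X] [T2Space X]
    (n : ℕ) (A : Set (SphereMaps n X)) :
    IsFillingDomain A ↔
      ∃ g : C(↥A, SphereMaps n X),
        (∀ a : ↥A, g a ∈ Set.range (constSph n X)) ∧ (inclC A).Homotopic g := by
  constructor
  · rintro ⟨s, hs⟩
    have hc : Continuous fun q : unitInterval × ↥A => shrink (s q.2) q.1 := by
      refine Continuous.subtype_mk (ContinuousMap.continuous_of_continuous_uncurry _ ?_) _
      change Continuous fun q : (unitInterval × ↥A) × ↥(Sph n) => s q.1.2 (polar n (q.1.1, q.2))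
      fun_prop
    refine ⟨⟨fun a => shrink (s a) 1, hc.comp (Continuous.prodMk_right 1)⟩, fun a =>
      ⟨s a ⟨0, by simp⟩, ?_⟩, ⟨⟨⟨fun q => shrink (s q.2) q.1, hc⟩, fun a => ?_, fun a => rfl⟩⟩⟩
    · refine Subtype.ext (ContinuousMap.ext fun p => ?_)
      change s a _ = s a (polar n (1, p))
      rw [polar_one]
    · refine Subtype.ext (ContinuousMap.ext fun p => ?_)
      change s a (polar n (0, p)) = a.1.1 p
      rw [polar_zero, ← hs a]
      rfl
  · rintro ⟨g, hg, ⟨H⟩⟩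
    let K : C(↥A × (unitInterval × ↥(Sph n)), X) :=
      ⟨fun q => (H (q.2.1, q.1)).1 q.2.2, by fun_prop⟩
    have hK : Function.FactorsThrough K ((ContinuousMap.id ↥A).prodMap (polar n)) := by
      rintro ⟨a, t, p⟩ ⟨a', t', p'⟩ h
      obtain rfl : a = a' := congrArg Prod.fst h
      obtain ⟨rfl, rfl | rfl⟩ := polar_eq (congrArg Prod.snd h)
      · obtain ⟨x, hx⟩ := hg a
        change (H (1, a)).1 p = (H (1, a)).1 p'
        rw [H.apply_one, ← hx]
        rfl
      · rfl
    have hq := polarProd_isQuotientMap n ↥A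
    refine ⟨(hq.lift K hK).curry, fun a => ContinuousMap.ext fun p => ?_⟩
    have h := DFunLike.congr_fun (hq.lift_comp K hK) (a, (0, p))
    change hq.lift K hK (a, polar n (0, p)) = (H (0, a)).1 p at h
    rw [polar_zero, H.apply_zero] at h
    exact h

end
end

section
/- Let X be a path-connected metrizable ANR, n ∈ ℕ₀, and let A ⊆ S_nX be a closed sphere filling domain. Then A has an open neighborhood U ⊆ S_nX that is a sphere filling domain. -/
/-!
The map `(γ, p) ↦ γ p` on `S_nX × Sⁿ` and the adjoint `(γ, p) ↦ s γ p` of the given filling on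
`A × B^{n+1}` agree on the overlap, so they glue to a continuous map on the closed subset
`A × B^{n+1} ∪ S_nX × Sⁿ` of the metrizable space `S_nX × B^{n+1}`. The ANR property extends it
to an open set `W`. As `B^{n+1}` is compact, the `γ` with `{γ} × B^{n+1} ⊆ W` form an open
neighborhood `U` of `A` (tube lemma), and currying the extension gives a sphere filling over `U`.
-/

open Metric Set ContinuousMap
open scoped RealInnerProductSpace

noncomputable section

universe u

/-- A metrizable space `Y` is an absolute neighborhood retract (ANR) if for every metrizable
space `Z`, every closed subspace `C ⊆ Z` and every continuous `f : C → Y`, the map `f` admits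
a continuous extension to an open neighborhood of `C` in `Z`. -/
def IsANR (Y : Type u) [TopologicalSpace Y] : Prop :=
  ∀ (Z : Type u) [TopologicalSpace Z] [TopologicalSpace.MetrizableSpace Z] (C : Set Z),
    IsClosed C → ∀ f : C(↥C, Y),
      ∃ (U : Set Z) (_ : IsOpen U) (hCU : C ⊆ U) (g : C(↥U, Y)),
        ∀ (z : Z) (hz : z ∈ C), g ⟨z, hCU hz⟩ = f ⟨z, hz⟩

open Classical in
/-- The glued map on `S_nX × B^{n+1}`: the filling `s` over `A`, evaluation on `Sⁿ`.
Only its values on `A × B^{n+1} ∪ S_nX × Sⁿ` matter; elsewhere it is an arbitrary constant. -/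
def glued {n : ℕ} {X : Type*} [TopologicalSpace X] [Nonempty X]
    (A : Set (SphereMaps n X)) (s : C(↥A, BallMaps n X)) (z : SphereMaps n X × ↥(Ball n)) : X :=
  if h : z.1 ∈ A then s ⟨z.1, h⟩ z.2
  else if h : (z.2 : EuclideanSpace ℝ (Fin (n + 1))) ∈ Sph n then z.1.1 ⟨z.2, h⟩
  else Classical.arbitrary X

lemma isClosed_sphPart {n : ℕ} {X : Type*} [TopologicalSpace X] :
    IsClosed {z : SphereMaps n X × ↥(Ball n) |
      (z.2 : EuclideanSpace ℝ (Fin (n + 1))) ∈ Sph n} :=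
  Metric.isClosed_sphere.preimage (continuous_subtype_val.comp continuous_snd)

section Glued

variable {n : ℕ} {X : Type*} [TopologicalSpace X] [Nonempty X]
  {A : Set (SphereMaps n X)} {s : C(↥A, BallMaps n X)}

lemma glued_of_mem {z : SphereMaps n X × ↥(Ball n)} (h : z.1 ∈ A) :
    glued A s z = s ⟨z.1, h⟩ z.2 := by
  simp [glued, h]

/-- On `S_nX × Sⁿ` the glued map is evaluation, over `A` as well because `s` is a filling. -/
lemma glued_of_sph (hs : IsSphereFilling A s) {z : SphereMaps n X × ↥(Ball n)}
    (h : (z.2 : EuclideanSpace ℝ (Fin (n + 1))) ∈ Sph n) :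
    glued A s z = z.1.1 ⟨z.2, h⟩ := by
  by_cases hz : z.1 ∈ A
  · rw [glued_of_mem hz]
    exact DFunLike.congr_fun (hs ⟨z.1, hz⟩) ⟨z.2, h⟩
  · unfold glued
    rw [dif_neg hz, dif_pos h]

lemma continuousOn_glued (hA : IsClosed A) (hs : IsSphereFilling A s) :
    ContinuousOn (glued A s) ({z | z.1 ∈ A} ∪
      {z | (z.2 : EuclideanSpace ℝ (Fin (n + 1))) ∈ Sph n}) := by
  refine ContinuousOn.union_of_isClosed ?_ ?_ (hA.preimage continuous_fst) isClosed_sphPart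
  · rw [continuousOn_iff_continuous_domRestrict]
    have h : Continuous fun z : {z : SphereMaps n X × ↥(Ball n) | z.1 ∈ A} =>
        s ⟨z.1.1, z.2⟩ z.1.2 := by
      have h1 : Continuous fun z : {z : SphereMaps n X × ↥(Ball n) | z.1 ∈ A} =>
          s ⟨z.1.1, z.2⟩ :=
        s.continuous.comp ((continuous_fst.comp continuous_subtype_val).subtype_mk _)
      exact continuous_eval.comp (h1.prodMk (continuous_snd.comp continuous_subtype_val))
    exact h.congr fun z => (glued_of_mem z.2).symm
  · rw [continuousOn_iff_continuous_domRestrict]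
    have h : Continuous fun z : {z : SphereMaps n X × ↥(Ball n) |
        (z.2 : EuclideanSpace ℝ (Fin (n + 1))) ∈ Sph n} =>
        z.1.1.1 ⟨(z.1.2 : EuclideanSpace ℝ (Fin (n + 1))), z.2⟩ := by
      have h1 : Continuous fun z : {z : SphereMaps n X × ↥(Ball n) |
          (z.2 : EuclideanSpace ℝ (Fin (n + 1))) ∈ Sph n} => z.1.1.1 :=
        continuous_subtype_val.comp (continuous_fst.comp continuous_subtype_val)
      exact continuous_eval.comp (h1.prodMk ((continuous_subtype_val.comp
        (continuous_snd.comp continuous_subtype_val)).subtype_mk _))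
    exact h.congr fun z => (glued_of_sph hs z.2).symm

end Glued

/-- in a path-connected metrizable ANR, every closed sphere filling domain
has an open neighborhood which is a sphere filling domain. -/
theorem closed_fillingDomain_extends {X : Type u} [TopologicalSpace X] [PathConnectedSpace X]
    [TopologicalSpace.MetrizableSpace X] (hX : IsANR X) (n : ℕ)
    (A : Set (SphereMaps n X)) (hA : IsClosed A) (hfill : IsFillingDomain A) :
    ∃ U : Set (SphereMaps n X), IsOpen U ∧ A ⊆ U ∧ IsFillingDomain U := by
  obtain ⟨s, hs⟩ := hfill
  have : Nonempty X := PathConnectedSpace.nonempty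
  have : CompactSpace ↥(Ball n) := isCompact_iff_compactSpace.mp (isCompact_closedBall _ _)
  have : CompactSpace ↥(Sph n) := isCompact_iff_compactSpace.mp (isCompact_sphere _ _)
  have : TopologicalSpace.MetrizableSpace (SphereMaps n X) :=
    Topology.IsEmbedding.subtypeVal.metrizableSpace
  have hcont := continuousOn_glued hA hs
  rw [continuousOn_iff_continuous_domRestrict] at hcont
  obtain ⟨W, hW, hCW, g, hg⟩ := hX (SphereMaps n X × ↥(Ball n)) _
    ((hA.preimage continuous_fst).union isClosed_sphPart) ⟨_, hcont⟩
  -- `U` consists of the `γ` whose whole slice `{γ} × B^{n+1}` lies in `W`.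
  let U : Set (SphereMaps n X) := (Set.image Prod.fst Wᶜ)ᶜ
  have hUW : ∀ γ ∈ U, ∀ p, (γ, p) ∈ W := fun γ hγ p => by
    by_contra h
    exact hγ ⟨(γ, p), h, rfl⟩
  have hgU : Continuous fun z : ↥U × ↥(Ball n) => g ⟨(z.1.1, z.2), hUW _ z.1.2 _⟩ :=
    g.continuous.comp (((continuous_subtype_val.comp continuous_fst).prodMk
      continuous_snd).subtype_mk _)
  refine ⟨U, (isClosedMap_fst_of_compactSpace _ hW.isClosed_compl).isOpen_compl, ?_,
    ContinuousMap.curry ⟨_, hgU⟩, fun γ => ?_⟩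
  · rintro γ hγ ⟨z, hz, rfl⟩
    exact hz (hCW (Or.inl hγ))
  · ext p
    have hp : ((γ.1, sphIncl n p) : SphereMaps n X × ↥(Ball n)) ∈
        ({z | z.1 ∈ A} ∪ {z | (z.2 : EuclideanSpace ℝ (Fin (n + 1))) ∈ Sph n} :
          Set (SphereMaps n X × ↥(Ball n))) := Or.inr p.2
    have h1 := hg _ hp
    have h2 := glued_of_sph hs (z := (γ.1, sphIncl n p)) p.2
    exact h1.trans h2

end
end

section
/- For every path-connected topological space X, the 0-spherical complexity equals the topological complexity: SC_0(X) = TC(X). -/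
/-!
Since `S⁰` consists of the two points `±1`, evaluating at them identifies `C(S⁰, X)` with `X × X`,
topologically as well (`S⁰` is discrete). In a path-connected space every map `S⁰ → X` extends
along a path, hence factors through the contractible space `[0,1]` and is nullhomotopic; so
evaluation is a homeomorphism `S₀X ≃ₜ X × X` (`evalHomeo`). The ball `B¹` is `[0,1]` up to the
affine reparametrisation `t ↦ 2t - 1`, and precomposing with it and with its inverse turns sphere
fillings over `A` into local sections of the endpoint map over the image of `A`, and conversely
(`isFillingDomain_preimage_iff`). Open covers therefore correspond, with the same number of members.
-/

open Metric Set ContinuousMap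
open scoped RealInnerProductSpace

noncomputable section

universe u

/-- The topological complexity `TC(X)`: the minimal number of open subsets of `X × X`
over each of which the endpoint fibration `C([0,1], X) → X × X` admits a continuous local
section, needed to cover `X × X` (`⊤` if no finite cover exists). -/
def topComplexity (X : Type*) [TopologicalSpace X] : ℕ∞ :=
  sInf {k : ℕ∞ | ∃ m : ℕ, k = m ∧ ∃ U : Fin m → Set (X × X),
    (∀ i, IsOpen (U i) ∧ ∃ s : C(↥(U i), C(unitInterval, X)),
      ∀ u : ↥(U i), ((s u) 0, (s u) 1) = (u : X × X)) ∧ (⋃ i, U i) = univ}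

/-- The point of `B¹` with coordinate `2t - 1`, as a continuous function of `t ∈ [0,1]`. -/
def ballOfI : C(unitInterval, ↥(Ball 0)) :=
  ⟨fun t => ⟨EuclideanSpace.single 0 (2 * (t : ℝ) - 1), by
      rw [mem_closedBall_zero_iff, PiLp.norm_single, Real.norm_eq_abs, abs_le]
      constructor <;> linarith [t.2.1, t.2.2]⟩, by
    refine Continuous.subtype_mk ?_ _
    refine (PiLp.continuous_toLp 2 _).comp ?_
    exact (continuous_single (0 : Fin 1)).comp
      (by fun_prop : Continuous fun t : unitInterval => 2 * (t : ℝ) - 1)⟩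

lemma abs_coord_le (p : ↥(Ball 0)) : |p.1 0| ≤ 1 := by
  have h := mem_closedBall_zero_iff.1 p.2
  rw [EuclideanSpace.norm_eq, Fin.sum_univ_one, Real.sqrt_sq (norm_nonneg _)] at h
  exact h

lemma abs_coord_eq (p : ↥(Sph 0)) : |p.1 0| = 1 := by
  have h := mem_sphere_zero_iff_norm.1 p.2
  rw [EuclideanSpace.norm_eq, Fin.sum_univ_one, Real.sqrt_sq (norm_nonneg _)] at h
  exact h

/-- The map `B¹ → [0,1]`, `p ↦ (p + 1) / 2`, inverse to `ballOfI`. -/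
def iOfBall : C(↥(Ball 0), unitInterval) :=
  ⟨fun p => ⟨(p.1 0 + 1) / 2, by
      have := abs_le.1 (abs_coord_le p)
      constructor <;> linarith⟩, by
    refine Continuous.subtype_mk ?_ _
    fun_prop⟩

/-- The point `-1` of `S⁰`. -/
def negPt : ↥(Sph 0) := ⟨EuclideanSpace.single 0 (-1), by simp⟩

/-- The point `1` of `S⁰`. -/
def posPt : ↥(Sph 0) := ⟨EuclideanSpace.single 0 1, by simp⟩

lemma eq_negPt_or_posPt (p : ↥(Sph 0)) : p = negPt ∨ p = posPt := by
  rcases eq_or_eq_neg_of_abs_eq (abs_coord_eq p) with h | h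
  · right
    ext i
    fin_cases i
    simpa [posPt] using h
  · left
    ext i
    fin_cases i
    simpa [negPt] using h

instance : DiscreteTopology ↥(Sph 0) := by
  have : Finite ↥(Sph 0) := by
    refine Set.finite_univ_iff.1 ((Set.toFinite {negPt, posPt}).subset fun p _ => ?_)
    simpa using eq_negPt_or_posPt p
  infer_instance

lemma negPt_coord : negPt.1 0 = -1 := by simp [negPt]

lemma posPt_coord : posPt.1 0 = 1 := by simp [posPt]

lemma iOfBall_negPt : iOfBall (sphIncl 0 negPt) = 0 := by
  ext
  change (negPt.1 0 + 1) / 2 = (0 : ℝ)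
  rw [negPt_coord]; norm_num

lemma iOfBall_posPt : iOfBall (sphIncl 0 posPt) = 1 := by
  ext
  change (posPt.1 0 + 1) / 2 = (1 : ℝ)
  rw [posPt_coord]; norm_num

lemma ballOfI_zero : ballOfI 0 = sphIncl 0 negPt := by
  ext i
  simp [ballOfI, sphIncl, negPt]

lemma ballOfI_one : ballOfI 1 = sphIncl 0 posPt := by
  ext i
  simp only [ballOfI, sphIncl, posPt, ContinuousMap.coe_mk, Set.Icc.coe_one]
  norm_num

lemma sphere_map_ext {X : Type*} [TopologicalSpace X] {f g : C(↥(Sph 0), X)}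
    (hn : f negPt = g negPt) (hp : f posPt = g posPt) : f = g := by
  ext p
  rcases eq_negPt_or_posPt p with rfl | rfl <;> assumption

/-- The map `S⁰ → X` sending `-1` to `x.1` and `1` to `x.2`. -/
def pairMap {X : Type*} [TopologicalSpace X] (x : X × X) : C(↥(Sph 0), X) :=
  ⟨fun p => if p.1 0 < 0 then x.1 else x.2, continuous_of_discreteTopology⟩

lemma pairMap_negPt {X : Type*} [TopologicalSpace X] (x : X × X) : pairMap x negPt = x.1 := by
  change (if negPt.1 0 < 0 then x.1 else x.2) = x.1
  rw [negPt_coord]; norm_num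

lemma pairMap_posPt {X : Type*} [TopologicalSpace X] (x : X × X) : pairMap x posPt = x.2 := by
  change (if posPt.1 0 < 0 then x.1 else x.2) = x.2
  rw [posPt_coord]; norm_num

lemma continuous_pairMap {X : Type*} [TopologicalSpace X] :
    Continuous (pairMap : X × X → C(↥(Sph 0), X)) := by
  refine ContinuousMap.continuous_of_continuous_uncurry _ ?_
  refine continuous_prod_of_discrete_right.2 fun p => ?_
  rcases eq_negPt_or_posPt p with rfl | rfl
  · simpa only [Function.uncurry, pairMap_negPt] using continuous_fst
  · simpa only [Function.uncurry, pairMap_posPt] using continuous_snd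

/-- Path-connectedness makes every map `S⁰ → X` nullhomotopic: a path between its two values
factors it through the contractible space `[0,1]`. -/
lemma pairMap_nullhomotopic {X : Type*} [TopologicalSpace X] [PathConnectedSpace X] (x : X × X) :
    (pairMap x).Nullhomotopic := by
  let γ := PathConnectedSpace.somePath x.1 x.2
  have h : pairMap x = γ.toContinuousMap.comp (iOfBall.comp (sphIncl 0)) := by
    refine sphere_map_ext ?_ ?_
    · rw [pairMap_negPt]
      change x.1 = γ (iOfBall (sphIncl 0 negPt))
      rw [iOfBall_negPt, γ.source]
    · rw [pairMap_posPt]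
      change x.2 = γ (iOfBall (sphIncl 0 posPt))
      rw [iOfBall_posPt, γ.target]
  rw [h]
  have hI : (ContinuousMap.id unitInterval).Nullhomotopic := by
    have : ContractibleSpace unitInterval :=
      (convex_Icc (0 : ℝ) 1).contractibleSpace ⟨0, by simp⟩
    exact id_nullhomotopic _
  exact (hI.comp_right γ.toContinuousMap).comp_left (iOfBall.comp (sphIncl 0))

/-- Evaluation at the two points of `S⁰`, as a homeomorphism `S₀X ≃ₜ X × X`. -/
def evalHomeo (X : Type*) [TopologicalSpace X] [PathConnectedSpace X] :
    SphereMaps 0 X ≃ₜ X × X where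
  toFun f := (f.1 negPt, f.1 posPt)
  invFun x := ⟨pairMap x, pairMap_nullhomotopic x⟩
  left_inv _ := Subtype.ext (sphere_map_ext (pairMap_negPt _) (pairMap_posPt _))
  right_inv x := Prod.ext (pairMap_negPt x) (pairMap_posPt x)
  continuous_toFun :=
    ((continuous_eval_const _).comp continuous_subtype_val).prodMk
      ((continuous_eval_const _).comp continuous_subtype_val)
  continuous_invFun := continuous_pairMap.subtype_mk _

lemma isFillingDomain_preimage_iff {X : Type*} [TopologicalSpace X] [PathConnectedSpace X]
    (U : Set (X × X)) :
    IsFillingDomain (evalHomeo X ⁻¹' U) ↔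
      ∃ s : C(↥U, C(unitInterval, X)), ∀ u : ↥U, ((s u) 0, (s u) 1) = (u : X × X) := by
  constructor
  · rintro ⟨s, hs⟩
    let g : C(↥U, ↥(evalHomeo X ⁻¹' U)) :=
      ⟨fun u => ⟨(evalHomeo X).symm u, by simp⟩,
        Continuous.subtype_mk ((evalHomeo X).symm.continuous.comp continuous_subtype_val)
          fun u => by simp⟩
    refine ⟨⟨fun u => (s (g u)).comp ballOfI,
      (ContinuousMap.continuous_precomp ballOfI).comp (s.continuous.comp g.continuous)⟩,
      fun u => ?_⟩
    change (s (g u) (ballOfI 0), s (g u) (ballOfI 1)) = (u : X × X)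
    rw [ballOfI_zero, ballOfI_one]
    exact Prod.ext ((DFunLike.congr_fun (hs (g u)) negPt).trans (pairMap_negPt _))
      ((DFunLike.congr_fun (hs (g u)) posPt).trans (pairMap_posPt _))
  · rintro ⟨s, hs⟩
    let g : C(↥(evalHomeo X ⁻¹' U), ↥U) :=
      ⟨fun f => ⟨evalHomeo X f, f.2⟩,
        ((evalHomeo X).continuous.comp continuous_subtype_val).subtype_mk _⟩
    refine ⟨⟨fun f => (s (g f)).comp iOfBall,
      (ContinuousMap.continuous_precomp iOfBall).comp (s.continuous.comp g.continuous)⟩,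
      fun f => sphere_map_ext ?_ ?_⟩
    · change s (g f) (iOfBall (sphIncl 0 negPt)) = _
      rw [iOfBall_negPt]
      exact congrArg Prod.fst (hs (g f))
    · change s (g f) (iOfBall (sphIncl 0 posPt)) = _
      rw [iOfBall_posPt]
      exact congrArg Prod.snd (hs (g f))

/-- `SC_0(X) = TC(X)` for every path-connected space `X`. -/
theorem SC_zero_eq_TC {X : Type*} [TopologicalSpace X] [PathConnectedSpace X] :
    SC 0 X = topComplexity X := by
  unfold SC topComplexity
  congr 1
  ext k
  refine exists_congr fun m => and_congr_right fun _ => ⟨?_, ?_⟩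
  · rintro ⟨U, hU, hcov⟩
    refine ⟨fun i => (evalHomeo X).symm ⁻¹' U i,
      fun i => ⟨(hU i).1.preimage (evalHomeo X).symm.continuous, ?_⟩, ?_⟩
    · rw [← isFillingDomain_preimage_iff, ← Set.preimage_comp]
      simpa using (hU i).2
    · rw [← Set.preimage_iUnion, hcov, Set.preimage_univ]
  · rintro ⟨U, hU, hcov⟩
    refine ⟨fun i => evalHomeo X ⁻¹' U i,
      fun i => ⟨(hU i).1.preimage (evalHomeo X).continuous,
        (isFillingDomain_preimage_iff _).2 (hU i).2⟩, ?_⟩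
    rw [← Set.preimage_iUnion, hcov, Set.preimage_univ]

end
end

section
/- Let X be a path-connected topological space and n ∈ ℕ. If S_nX is a normal topological space and A, B ⊆ S_nX satisfy cl(A) ∩ cl(B) = ∅ (closures taken in S_nX), then SC_{n,X}(A ∪ B) = max{SC_{n,X}(A), SC_{n,X}(B)}. -/
/-!
A cover of `A ∪ B` covers `A` and `B`, so `SCsub` is monotone and only `≤` needs an argument.
By normality, `A` and `B` have disjoint open neighbourhoods `P` and `Q`. Given covers of `A` and
of `B` by open filling domains `U i` and `V i`, both padded with empty sets to a common length,
the sets `(U i ∩ P) ∪ (V i ∩ Q)` cover `A ∪ B`. Each of them is a filling domain, because fillings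
over two disjoint open sets glue to a continuous filling over the union
(`IsFillingDomain.union_of_disjoint`).
-/

open Metric Set ContinuousMap
open scoped RealInnerProductSpace

noncomputable section

universe u

/-- The subspace spherical complexity `SC_{n,X}(A)`: the minimal number of sphere filling
domains, open in `S_nX`, needed to cover `A` (`⊤` if no finite cover exists;
the empty set gets the value `0`). -/
def SCsub (n : ℕ) (X : Type*) [TopologicalSpace X] (A : Set (SphereMaps n X)) : ℕ∞ :=
  sInf {k : ℕ∞ | ∃ m : ℕ, k = m ∧ ∃ U : Fin m → Set (SphereMaps n X),
    (∀ i, IsOpen (U i) ∧ IsFillingDomain (U i)) ∧ A ⊆ ⋃ i, U i}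

/-- Fillings as globally defined functions, continuous on the domain; the values outside `A`
are irrelevant. This form makes restricting and gluing fillings direct. -/
lemma isFillingDomain_iff_s9 {n : ℕ} {X : Type*} [TopologicalSpace X] [Nonempty X]
    (A : Set (SphereMaps n X)) :
    IsFillingDomain A ↔ ∃ f : SphereMaps n X → BallMaps n X, ContinuousOn f A ∧
      ∀ γ ∈ A, (f γ).comp (sphIncl n) = γ.1 := by
  classical
  constructor
  · rintro ⟨s, hs⟩
    have hX : Nonempty (BallMaps n X) := ⟨ContinuousMap.const _ (Classical.arbitrary X)⟩
    refine ⟨fun γ => if h : γ ∈ A then s ⟨γ, h⟩ else Classical.arbitrary _, ?_, ?_⟩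
    · rw [continuousOn_iff_continuous_domRestrict]
      convert s.continuous using 1
      ext1 γ
      simp
    · intro γ hγ
      simpa [hγ] using hs ⟨γ, hγ⟩
  · rintro ⟨f, hf, hfA⟩
    exact ⟨⟨A.domRestrict f, hf.domRestrict⟩, fun γ => hfA γ.1 γ.2⟩

lemma IsFillingDomain.mono {n : ℕ} {X : Type*} [TopologicalSpace X] [Nonempty X]
    {A B : Set (SphereMaps n X)} (hB : IsFillingDomain B) (h : A ⊆ B) : IsFillingDomain A := by
  rw [isFillingDomain_iff_s9] at hB ⊢
  obtain ⟨f, hf, hfB⟩ := hB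
  exact ⟨f, hf.mono h, fun γ hγ => hfB γ (h hγ)⟩

lemma isFillingDomain_empty {n : ℕ} {X : Type*} [TopologicalSpace X] [Nonempty X] :
    IsFillingDomain (∅ : Set (SphereMaps n X)) := by
  rw [isFillingDomain_iff_s9]
  exact ⟨fun _ => ContinuousMap.const _ (Classical.arbitrary X), continuousOn_empty _, by simp⟩

lemma IsFillingDomain.union_of_disjoint {n : ℕ} {X : Type*} [TopologicalSpace X] [Nonempty X]
    {A B : Set (SphereMaps n X)} (hA : IsFillingDomain A) (hB : IsFillingDomain B)
    (hAo : IsOpen A) (hBo : IsOpen B) (h : Disjoint A B) : IsFillingDomain (A ∪ B) := by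
  classical
  rw [isFillingDomain_iff_s9] at hA hB ⊢
  obtain ⟨f, hf, hfA⟩ := hA
  obtain ⟨g, hg, hgB⟩ := hB
  have hB' : ∀ γ ∈ B, γ ∉ A := fun γ hγ hγA => Set.disjoint_left.1 h hγA hγ
  refine ⟨A.piecewise f g, ?_, ?_⟩
  · refine ContinuousOn.union_of_isOpen (hf.congr fun γ hγ => ?_) (hg.congr fun γ hγ => ?_) hAo hBo
    · exact Set.piecewise_eq_of_mem _ _ _ hγ
    · exact Set.piecewise_eq_of_notMem _ _ _ (hB' γ hγ)
  · rintro γ (hγ | hγ)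
    · rw [Set.piecewise_eq_of_mem _ _ _ hγ, hfA γ hγ]
    · rw [Set.piecewise_eq_of_notMem _ _ _ (hB' γ hγ), hgB γ hγ]

/-- A cover of length `m` can be padded with empty sets, so `SCsub n X A ≤ m` already gives a
cover of length exactly `m`. -/
lemma SCsub_le_iff {n : ℕ} {X : Type*} [TopologicalSpace X] [Nonempty X]
    (A : Set (SphereMaps n X)) (m : ℕ) :
    SCsub n X A ≤ m ↔ ∃ U : Fin m → Set (SphereMaps n X),
      (∀ i, IsOpen (U i) ∧ IsFillingDomain (U i)) ∧ A ⊆ ⋃ i, U i := by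
  constructor
  · intro h
    -- The set defining `SCsub` is nonempty since its infimum is not `⊤`, so the infimum is attained.
    have hne : {k : ℕ∞ | ∃ m : ℕ, k = m ∧ ∃ U : Fin m → Set (SphereMaps n X),
        (∀ i, IsOpen (U i) ∧ IsFillingDomain (U i)) ∧ A ⊆ ⋃ i, U i}.Nonempty := by
      by_contra hempty
      rw [Set.not_nonempty_iff_eq_empty] at hempty
      rw [SCsub, hempty, sInf_empty] at h
      exact absurd h (by simp)
    obtain ⟨k, hk, U, hU, hAU⟩ := csInf_mem hne
    have hkm : k ≤ m := by
      rw [SCsub, hk] at h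
      exact_mod_cast h
    refine ⟨fun i => if hi : i.1 < k then U ⟨i, hi⟩ else ∅, fun i => ?_, fun γ hγ => ?_⟩
    · dsimp only
      split_ifs with hi
      · exact hU _
      · exact ⟨isOpen_empty, isFillingDomain_empty⟩
    · obtain ⟨i, hi⟩ := Set.mem_iUnion.1 (hAU hγ)
      refine Set.mem_iUnion.2 ⟨⟨i, i.2.trans_le hkm⟩, ?_⟩
      simpa using hi
  · rintro ⟨U, hU, hAU⟩
    exact sInf_le ⟨m, rfl, U, hU, hAU⟩

lemma SCsub_mono {n : ℕ} {X : Type*} [TopologicalSpace X]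
    {A B : Set (SphereMaps n X)} (h : A ⊆ B) : SCsub n X A ≤ SCsub n X B :=
  sInf_le_sInf fun _ ⟨m, hm, U, hU, hBU⟩ => ⟨m, hm, U, hU, h.trans hBU⟩

/-- if `S_nX` is normal and `A`, `B` have disjoint closures, then
`SC_{n,X}(A ∪ B) = max (SC_{n,X}(A), SC_{n,X}(B))`. -/
theorem SCsub_union_of_sep {X : Type*} [TopologicalSpace X] [PathConnectedSpace X]
    (n : ℕ) (hn : 1 ≤ n) [NormalSpace (SphereMaps n X)]
    (A B : Set (SphereMaps n X)) (hAB : closure A ∩ closure B = ∅) :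
    SCsub n X (A ∪ B) = max (SCsub n X A) (SCsub n X B) := by
  have hX : Nonempty X := PathConnectedSpace.nonempty
  refine le_antisymm ?_ (max_le (SCsub_mono subset_union_left) (SCsub_mono subset_union_right))
  rcases eq_or_ne (max (SCsub n X A) (SCsub n X B)) ⊤ with htop | htop
  · rw [htop]
    exact le_top
  obtain ⟨m, hm⟩ := ENat.ne_top_iff_exists.1 htop
  obtain ⟨U, hU, hAU⟩ := (SCsub_le_iff A m).1 ((le_max_left _ _).trans_eq hm.symm)
  obtain ⟨V, hV, hBV⟩ := (SCsub_le_iff B m).1 ((le_max_right _ _).trans_eq hm.symm)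
  obtain ⟨P, Q, hP, hQ, hAP, hBQ, hPQ⟩ := normal_separation isClosed_closure isClosed_closure
    (Set.disjoint_iff_inter_eq_empty.2 hAB)
  rw [← hm, SCsub_le_iff]
  refine ⟨fun i => (U i ∩ P) ∪ (V i ∩ Q), fun i => ?_, ?_⟩
  · have hUo := (hU i).1.inter hP
    have hVo := (hV i).1.inter hQ
    exact ⟨hUo.union hVo, ((hU i).2.mono inter_subset_left).union_of_disjoint
      ((hV i).2.mono inter_subset_left) hUo hVo
      (hPQ.mono inter_subset_right inter_subset_right)⟩
  · rintro γ (hγ | hγ)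
    · obtain ⟨i, hi⟩ := Set.mem_iUnion.1 (hAU hγ)
      exact Set.mem_iUnion.2 ⟨i, Or.inl ⟨hi, hAP (subset_closure hγ)⟩⟩
    · obtain ⟨i, hi⟩ := Set.mem_iUnion.1 (hBV hγ)
      exact Set.mem_iUnion.2 ⟨i, Or.inr ⟨hi, hBQ (subset_closure hγ)⟩⟩

end
end

section
/- Let X be a path-connected topological space and n ∈ ℕ₀. If A ⊆ S_nX is closed and Φ : A × [0,1] → S_nX is a continuous map with Φ(γ,0) = γ for all γ ∈ A, then SC^cl_{n,X}(A) ≤ SC^cl_{n,X}(Φ₁(A)), where Φ₁(γ) := Φ(γ,1). -/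
/-!
A cover of `Φ₁(A)` by closed sphere filling domains `U i` pulls back along `Φ₁` to a cover of `A`
by sets `V i ⊆ A`, which are closed in `S_nX` because `A` is. Each `V i` is a sphere filling
domain (`isFillingDomain_of_deformation`): on the ball of radius `1/2` use the rescaled filling of
`Φ₁(γ) ∈ U i`, and at radius `r ≥ 1/2` in direction `v` use `Φ(γ, 2 - 2r)(v)`. The two formulas
agree at `r = 1/2`, and the second gives `γ` at `r = 1`. Continuity in `γ` follows by currying.
-/

open Metric Set ContinuousMap
open scoped RealInnerProductSpace

noncomputable section

universe u

/-- `SC^cl_{n,X}(A)`: the minimal number of sphere filling domains, closed in `S_nX`,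
needed to cover `A` (`⊤` if no finite cover exists). -/
def SCcl (n : ℕ) (X : Type*) [TopologicalSpace X] (A : Set (SphereMaps n X)) : ℕ∞ :=
  sInf {k : ℕ∞ | ∃ m : ℕ, k = m ∧ ∃ U : Fin m → Set (SphereMaps n X),
    (∀ i, IsClosed (U i) ∧ IsFillingDomain (U i)) ∧ A ⊆ ⋃ i, U i}

/-- The radial projection `x ↦ x / ‖x‖` onto `Sⁿ`, with an arbitrary value at the origin. -/
def radialDir (n : ℕ) (x : EuclideanSpace ℝ (Fin (n + 1))) : ↥(Sph n) :=
  if h : x = 0 then ⟨EuclideanSpace.single 0 1, by simp⟩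
  else ⟨‖x‖⁻¹ • x, by simp [norm_smul, h]⟩

lemma continuousOn_radialDir (n : ℕ) : ContinuousOn (radialDir n) {x | x ≠ 0} := by
  rw [Topology.IsInducing.subtypeVal.continuousOn_iff]
  have h : ContinuousOn (fun x : EuclideanSpace ℝ (Fin (n + 1)) => ‖x‖⁻¹ • x) {x | x ≠ 0} :=
    (continuous_norm.continuousOn.inv₀ fun x hx => norm_ne_zero_iff.2 hx).smul continuousOn_id
  refine h.congr fun x hx => ?_
  have hx' : x ≠ 0 := hx
  simp [radialDir, hx']

/-- The doubling map `x ↦ 2x` on the half-radius ball, extended continuously to the whole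
unit ball by projecting radially onto the unit sphere outside radius `1/2`. -/
def clampDouble (n : ℕ) (x : ↥(Ball n)) : ↥(Ball n) :=
  ⟨(max 1 ‖(2 : ℝ) • x.1‖)⁻¹ • ((2 : ℝ) • x.1), by
    rw [mem_closedBall_zero_iff, norm_smul, norm_inv, Real.norm_eq_abs,
      abs_of_pos (lt_of_lt_of_le one_pos (le_max_left _ _)), inv_mul_le_iff₀
        (lt_of_lt_of_le one_pos (le_max_left _ _)), mul_one]
    exact le_max_right _ _⟩

lemma continuous_clampDouble (n : ℕ) : Continuous (clampDouble n) := by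
  refine Continuous.subtype_mk ?_ _
  have h : Continuous fun x : ↥(Ball n) => (2 : ℝ) • x.1 := by fun_prop
  exact ((continuous_const.max h.norm).inv₀ fun x =>
    (lt_of_lt_of_le one_pos (le_max_left _ _)).ne').smul h

lemma clampDouble_eq (n : ℕ) (x : ↥(Ball n)) (hx : ‖x.1‖ = 1 / 2) :
    clampDouble n x = sphIncl n (radialDir n x.1) := by
  have h0 : x.1 ≠ 0 := by
    intro h
    rw [h, norm_zero] at hx
    norm_num at hx
  apply Subtype.ext
  simp only [clampDouble, sphIncl, radialDir, h0, dif_neg, not_false_eq_true,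
    ContinuousMap.coe_mk, norm_smul, hx]
  norm_num

lemma radialDir_coe (n : ℕ) (p : ↥(Sph n)) : radialDir n p.1 = p := by
  have hp : ‖p.1‖ = 1 := mem_sphere_zero_iff_norm.1 p.2
  have h0 : p.1 ≠ 0 := by
    intro h
    rw [h, norm_zero] at hp
    norm_num at hp
  apply Subtype.ext
  simp only [radialDir, h0, dif_neg, not_false_eq_true, hp, inv_one, one_smul]

/-- The fillings over `U` of the end maps of a homotopy, glued with the homotopy itself on an
outer collar of the ball, fill the initial maps. -/
lemma isFillingDomain_of_deformation {X : Type*} [TopologicalSpace X] {n : ℕ}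
    {A U V : Set (SphereMaps n X)} (hVA : V ⊆ A)
    (Φ : ↥A × unitInterval → SphereMaps n X) (hΦ : Continuous Φ)
    (h0 : ∀ γ : ↥A, Φ (γ, 0) = γ)
    (hV : ∀ γ (hγ : γ ∈ V), Φ (⟨γ, hVA hγ⟩, 1) ∈ U) (hU : IsFillingDomain U) :
    IsFillingDomain V := by
  obtain ⟨s, hs⟩ := hU
  let time : ↥(Ball n) → unitInterval := fun x => Set.projIcc 0 1 zero_le_one (2 - 2 * ‖x.1‖)
  have htime : Continuous time := continuous_projIcc.comp (by fun_prop)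
  let inner : ↥V × ↥(Ball n) → X := fun p =>
    s ⟨Φ (⟨p.1.1, hVA p.1.2⟩, 1), hV p.1.1 p.1.2⟩ (clampDouble n p.2)
  let outer : ↥V × ↥(Ball n) → X := fun p =>
    (Φ (⟨p.1.1, hVA p.1.2⟩, time p.2)).1 (radialDir n p.2.1)
  have hinner : Continuous inner := by
    refine ContinuousEval.continuous_eval.comp (Continuous.prodMk (s.continuous.comp
      (Continuous.subtype_mk (hΦ.comp ?_) _)) ((continuous_clampDouble n).comp continuous_snd))
    fun_prop
  have houter : ContinuousOn outer {p | 1 / 2 ≤ ‖p.2.1‖} := by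
    have h1 : Continuous fun p : ↥V × ↥(Ball n) =>
        (Φ (⟨p.1.1, hVA p.1.2⟩, time p.2)).1 :=
      continuous_subtype_val.comp (hΦ.comp (by fun_prop))
    have h2 : ContinuousOn (fun p : ↥V × ↥(Ball n) => radialDir n p.2.1)
        {p | 1 / 2 ≤ ‖p.2.1‖} := by
      refine (continuousOn_radialDir n).comp
        (continuous_subtype_val.comp continuous_snd).continuousOn fun p hp => ?_
      exact norm_pos_iff.1 (lt_of_lt_of_le (by norm_num) hp)
    exact ContinuousEval.continuous_eval.comp_continuousOn (h1.continuousOn.prodMk h2)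
  have hglue : Continuous fun p : ↥V × ↥(Ball n) =>
      if ‖p.2.1‖ ≤ 1 / 2 then inner p else outer p := by
    refine continuous_if_le (by fun_prop) continuous_const hinner.continuousOn houter
      fun p hp => ?_
    -- At radius `1/2` the collar has time parameter `1`.
    have ht : time p.2 = 1 := by
      simp only [time, hp]
      norm_num
    simp only [inner, outer, ht, clampDouble_eq n p.2 hp]
    exact DFunLike.congr_fun (hs ⟨Φ (⟨p.1.1, hVA p.1.2⟩, 1), hV p.1.1 p.1.2⟩) _
  refine ⟨ContinuousMap.curry ⟨_, hglue⟩, fun γ => ?_⟩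
  ext p
  have hp : ‖p.1‖ = 1 := mem_sphere_zero_iff_norm.1 p.2
  have ht : time (sphIncl n p) = 0 := by
    simp [time, sphIncl, hp]
  have hp' : ¬ ‖(sphIncl n p).1‖ ≤ 1 / 2 := by
    change ¬ ‖p.1‖ ≤ 1 / 2
    rw [hp]; norm_num
  simp only [ContinuousMap.comp_apply, ContinuousMap.curry_apply, ContinuousMap.coe_mk, if_neg hp',
    outer, ht, h0]
  exact congrArg _ (radialDir_coe n p)

/-- deformation monotonicity: if `A ⊆ S_nX` is closed and `Φ` is a
deformation of `A`, then `SC^cl_{n,X}(A) ≤ SC^cl_{n,X}(Φ₁(A))`. -/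
theorem SCcl_deformation {X : Type*} [TopologicalSpace X] [PathConnectedSpace X] (n : ℕ)
    (A : Set (SphereMaps n X)) (hA : IsClosed A)
    (Φ : ↥A × unitInterval → SphereMaps n X) (hΦ : Continuous Φ)
    (h0 : ∀ γ : ↥A, Φ (γ, 0) = γ) :
    SCcl n X A ≤ SCcl n X (Set.range fun γ : ↥A => Φ (γ, 1)) := by
  refine le_sInf ?_
  rintro k ⟨m, rfl, U, hU, hcov⟩
  refine sInf_le ⟨m, rfl, fun i => Subtype.val '' {γ : ↥A | Φ (γ, 1) ∈ U i}, fun i => ⟨?_, ?_⟩, ?_⟩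
  · exact hA.isClosedEmbedding_subtypeVal.isClosedMap _ ((hU i).1.preimage (by fun_prop))
  · refine isFillingDomain_of_deformation (Subtype.coe_image_subset _ _) Φ hΦ h0 ?_ (hU i).2
    rintro _ ⟨γ, hγ, rfl⟩
    exact hγ
  · intro γ hγ
    obtain ⟨i, hi⟩ := mem_iUnion.1 (hcov ⟨⟨γ, hγ⟩, rfl⟩)
    exact mem_iUnion.2 ⟨i, ⟨γ, hγ⟩, hi, rfl⟩

end
end

section
/- Let X be a path-connected metrizable ANR, n ∈ ℕ, A ⊆ S_nX, F : A → ℝ continuous and φ : A → A a homotopy equivalence. Assume that F is bounded from below, that (F,φ) satisfies condition (D) on A, and that SC_{n,X}(φ(B)) ≥ SC_{n,X}(B) for all closed subsets B ⊆ A. Then for every λ ∈ ℝ, SC_{n,X}(F^λ) ≤ Σ_{μ ≤ λ} SC_{n,X}(Fix φ ∩ F_μ), where F^λ := F⁻¹((−∞,λ]), F_μ := F⁻¹({μ}) and the sum runs over all μ ∈ (−∞,λ]. -/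
/-!
This is the Lusternik–Schnirelmann argument for the index function `SC`, which is monotone,
subadditive and, being defined by open covers, constant on a suitable open neighbourhood of
each set of finite complexity.

Assume the right-hand sum is finite. Since `SC` is at least `1` on nonempty sets, only finitely
many values `μ ≤ λ` are attained by `F` on `Fix φ`. Let `K_t = Fix φ ∩ F_t` and let `N` be an
open neighbourhood of `K_t` with `SC N = SC K_t`. On the closed strip of points outside `N` with
values in `[t - δ, t + δ] ∩ (-∞, λ]`, for `δ` small, there are no fixed points, so (D2) bounds
`F - F ∘ φ` away from zero there. Hence `φ` maps `F^{min (t + ε) λ} \ N` into `F^{t - ε}` for some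
`ε > 0` (`exists_push_down`), and subadditivity together with the assumption on `φ` gives
`SC F^{min (t + ε) λ} ≤ SC F^{t - ε} + SC K_t` (`SCsub_local_step`). As `F` is bounded below, a
supremum argument along the real line propagates this from an empty sublevel set up to `F^λ`
(`le_of_local_step`).
-/

open Metric Set ContinuousMap
open scoped RealInnerProductSpace

noncomputable section

universe u

/-- A continuous map is a homotopy equivalence. -/
def IsHtpyEquiv {Y Z : Type*} [TopologicalSpace Y] [TopologicalSpace Z] (f : C(Y, Z)) : Prop :=
  ∃ g : C(Z, Y), (f.comp g).Homotopic (ContinuousMap.id Z) ∧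
    (g.comp f).Homotopic (ContinuousMap.id Y)

/-- Condition (D) of Rudyak–Schlenk for a function `F` and a self-map `φ`:
(D1) `F(φ(x)) < F(x)` away from the fixed points of `φ`, and (D2) whenever `F` is bounded
on a set `B` but `{F(y) - F(φ(y)) : y ∈ B}` is not bounded away from zero, the closure
of `B` meets `Fix φ`. -/
def CondD {Y : Type*} [TopologicalSpace Y] (F : Y → ℝ) (φ : Y → Y) : Prop :=
  (∀ x : Y, φ x ≠ x → F (φ x) < F x) ∧
  (∀ B : Set Y, (∃ M : ℝ, ∀ y ∈ B, |F y| ≤ M) →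
    (¬ ∃ ε > 0, ∀ y ∈ B, ε ≤ |F y - F (φ y)|) →
    (closure B ∩ {x | φ x = x}).Nonempty)

/-- The sum of a (possibly infinite) family in `ℕ∞`, defined as the supremum of its
finite partial sums. -/
def esum {ι : Type*} (f : ι → ℕ∞) : ℕ∞ := ⨆ s : Finset ι, ∑ i ∈ s, f i

/-- A finite complexity is realized by an open cover. -/
lemma SCsub_exists_cover {n : ℕ} {X : Type*} [TopologicalSpace X] {A : Set (SphereMaps n X)}
    (h : SCsub n X A ≠ ⊤) :
    ∃ m : ℕ, SCsub n X A = m ∧ ∃ U : Fin m → Set (SphereMaps n X),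
      (∀ i, IsOpen (U i) ∧ IsFillingDomain (U i)) ∧ A ⊆ ⋃ i, U i := by
  have hne : {k : ℕ∞ | ∃ m : ℕ, k = m ∧ ∃ U : Fin m → Set (SphereMaps n X),
      (∀ i, IsOpen (U i) ∧ IsFillingDomain (U i)) ∧ A ⊆ ⋃ i, U i}.Nonempty := by
    by_contra hc
    rw [Set.not_nonempty_iff_eq_empty] at hc
    exact h (by rw [SCsub, hc, sInf_empty])
  exact csInf_mem hne

lemma SCsub_le_of_cover {n : ℕ} {X : Type*} [TopologicalSpace X] {A : Set (SphereMaps n X)}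
    {m : ℕ} (U : Fin m → Set (SphereMaps n X))
    (hU : ∀ i, IsOpen (U i) ∧ IsFillingDomain (U i)) (hA : A ⊆ ⋃ i, U i) :
    SCsub n X A ≤ m :=
  sInf_le ⟨m, rfl, U, hU, hA⟩

lemma SCsub_empty {n : ℕ} {X : Type*} [TopologicalSpace X] :
    SCsub n X (∅ : Set (SphereMaps n X)) = 0 := by
  have h := SCsub_le_of_cover (n := n) (X := X) (A := ∅) (m := 0) (fun _ => ∅)
    (fun i => i.elim0) (Set.empty_subset _)
  simpa using h

lemma SCsub_union_le {n : ℕ} {X : Type*} [TopologicalSpace X] (A B : Set (SphereMaps n X)) :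
    SCsub n X (A ∪ B) ≤ SCsub n X A + SCsub n X B := by
  by_cases hA : SCsub n X A = ⊤
  · simp [hA]
  by_cases hB : SCsub n X B = ⊤
  · simp [hB]
  obtain ⟨a, ha, U, hU, hAU⟩ := SCsub_exists_cover hA
  obtain ⟨b, hb, V, hV, hBV⟩ := SCsub_exists_cover hB
  rw [ha, hb, ← Nat.cast_add]
  refine SCsub_le_of_cover (Fin.append U V) (fun i => ?_) ?_
  · refine Fin.addCases (fun i => ?_) (fun i => ?_) i
    · simpa using hU i
    · simpa using hV i
  · rintro x (hx | hx)
    · obtain ⟨i, hi⟩ := Set.mem_iUnion.1 (hAU hx)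
      exact Set.mem_iUnion.2 ⟨Fin.castAdd b i, by simpa using hi⟩
    · obtain ⟨i, hi⟩ := Set.mem_iUnion.1 (hBV hx)
      exact Set.mem_iUnion.2 ⟨Fin.natAdd a i, by simpa using hi⟩

lemma eq_empty_of_SCsub_eq_zero {n : ℕ} {X : Type*} [TopologicalSpace X]
    {A : Set (SphereMaps n X)} (h : SCsub n X A = 0) : A = ∅ := by
  obtain ⟨m, hm, U, -, hAU⟩ := SCsub_exists_cover (A := A) (by simp [h])
  have hm0 : m = 0 := by
    rw [h] at hm
    exact_mod_cast hm.symm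
  subst hm0
  simpa using hAU

/-- The continuity property of the index: some open neighbourhood has the same complexity. -/
lemma SCsub_exists_open_nhd {n : ℕ} {X : Type*} [TopologicalSpace X]
    {A : Set (SphereMaps n X)} (h : SCsub n X A ≠ ⊤) :
    ∃ N : Set (SphereMaps n X), IsOpen N ∧ A ⊆ N ∧ SCsub n X N ≤ SCsub n X A := by
  obtain ⟨m, hm, U, hU, hAU⟩ := SCsub_exists_cover h
  refine ⟨⋃ i, U i, isOpen_iUnion fun i => (hU i).1, hAU, ?_⟩
  rw [hm]
  exact SCsub_le_of_cover U hU subset_rfl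

/-- A finite sum in `ℕ∞` has finite support. -/
lemma finite_support_of_esum_ne_top {ι : Type*} {f : ι → ℕ∞} (h : esum f ≠ ⊤) :
    {i | f i ≠ 0}.Finite := by
  by_contra hinf
  apply h
  rw [ENat.eq_top_iff_forall_ge]
  intro m
  obtain ⟨s, hs, hcard⟩ := Set.Infinite.exists_subset_card_eq hinf m
  calc (m : ℕ∞) = ∑ i ∈ s, 1 := by simp [hcard]
    _ ≤ ∑ i ∈ s, f i := Finset.sum_le_sum fun i hi => by
        have hfi : f i ≠ 0 := hs hi
        exact Order.one_le_iff_pos.2 (pos_iff_ne_zero.2 hfi)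
    _ ≤ esum f := le_iSup (fun s : Finset ι => ∑ i ∈ s, f i) s

lemma ne_top_of_esum_ne_top {ι : Type*} {f : ι → ℕ∞} (h : esum f ≠ ⊤) (i : ι) : f i ≠ ⊤ := by
  intro hi
  apply h
  rw [eq_top_iff, ← hi]
  simpa [esum] using le_iSup (fun s : Finset ι => ∑ i ∈ s, f i) {i}

/-- Outside an open neighbourhood of the fixed points at level `t`, the map `φ` carries the
sublevel set just above `t` below `t`, provided `F` takes only finitely many values below `lam`
on fixed points. -/
lemma exists_push_down {Y : Type*} [TopologicalSpace Y] (F : C(Y, ℝ)) (φ : C(Y, Y))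
    (hD : CondD ⇑F ⇑φ) (lam : ℝ) {P : Set ℝ} (hP : P.Finite)
    (hcrit : ∀ x, φ x = x → F x ≤ lam → F x ∈ P) (t : ℝ) {N : Set Y} (hN : IsOpen N)
    (hKN : ∀ x, φ x = x → F x = t → x ∈ N) :
    ∃ ε > 0, ∀ x, F x ≤ t + ε → F x ≤ lam → x ∉ N → F (φ x) ≤ t - ε := by
  -- `δ` isolates `t` from the other critical values.
  obtain ⟨δ, hδ, hδP⟩ : ∃ δ > 0, ∀ p ∈ P, |p - t| ≤ δ → p = t := by
    have hcl : (P \ {t})ᶜ ∈ nhds t :=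
      (hP.subset Set.sdiff_subset).isClosed.isOpen_compl.mem_nhds (by simp)
    obtain ⟨r, hr, hball⟩ := Metric.nhds_basis_closedBall.mem_iff.1 hcl
    refine ⟨r, hr, fun p hp hpt => ?_⟩
    by_contra hne
    exact hball (Metric.mem_closedBall.2 (by rwa [Real.dist_eq])) ⟨hp, hne⟩
  have hle : ∀ x, F (φ x) ≤ F x := fun x => by
    by_cases hx : φ x = x
    · rw [hx]
    · exact (hD.1 x hx).le
  set B : Set Y := {x | F x ≤ lam ∧ |F x - t| ≤ δ ∧ x ∉ N} with hB
  have hBclosed : IsClosed B := by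
    have h1 : IsClosed {x | F x ≤ lam} := isClosed_le F.continuous continuous_const
    have h2 : IsClosed {x | |F x - t| ≤ δ} :=
      isClosed_le ((F.continuous.sub continuous_const).abs) continuous_const
    exact h1.inter (h2.inter hN.isClosed_compl)
  have hgap : ∃ ε > 0, ∀ y ∈ B, ε ≤ |F y - F (φ y)| := by
    by_contra hno
    obtain ⟨x, hxB, hx⟩ := hD.2 B ⟨|t| + δ, fun y hy => by
      have := abs_sub_abs_le_abs_sub (F y) t
      linarith [hy.2.1]⟩ hno
    rw [hBclosed.closure_eq] at hxB
    exact hxB.2.2 (hKN x hx (hδP _ (hcrit x hx hxB.1) hxB.2.1))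
  obtain ⟨η, hη, hηB⟩ := hgap
  refine ⟨min δ (η / 2), lt_min hδ (half_pos hη), fun x hx hxl hxN => ?_⟩
  have h1 : min δ (η / 2) ≤ δ := min_le_left _ _
  have h2 : min δ (η / 2) ≤ η / 2 := min_le_right _ _
  by_cases hlow : t - δ ≤ F x
  · have hxB : x ∈ B := ⟨hxl, abs_le.2 ⟨by linarith, by linarith⟩, hxN⟩
    have := hηB x hxB
    rw [abs_of_nonneg (by linarith [hle x])] at this
    linarith
  · linarith [hle x]

/-- Crossing the level `t` raises the complexity of sublevel sets by at most the complexity of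
the fixed points at level `t`. -/
lemma SCsub_local_step {n : ℕ} {X : Type*} [TopologicalSpace X]
    (A : Set (SphereMaps n X)) (F : C(↥A, ℝ)) (φ : C(↥A, ↥A)) (hD : CondD ⇑F ⇑φ)
    (hmono : ∀ B : Set ↥A, IsClosed B →
      SCsub n X (Subtype.val '' B) ≤ SCsub n X (Subtype.val '' (⇑φ '' B)))
    (lam : ℝ) {P : Set ℝ} (hP : P.Finite)
    (hcrit : ∀ x, φ x = x → F x ≤ lam → F x ∈ P) (t : ℝ)
    (hfin : SCsub n X (Subtype.val '' {γ : ↥A | φ γ = γ ∧ F γ = t}) ≠ ⊤) :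
    ∃ ε > 0, ∀ s, s ≤ t + ε → s ≤ lam →
      SCsub n X (Subtype.val '' {γ : ↥A | F γ ≤ s}) ≤
        SCsub n X (Subtype.val '' {γ : ↥A | F γ ≤ t - ε}) +
          SCsub n X (Subtype.val '' {γ : ↥A | φ γ = γ ∧ F γ = t}) := by
  obtain ⟨N, hN, hKN, hNle⟩ := SCsub_exists_open_nhd hfin
  have hN' : IsOpen ((↑) ⁻¹' N : Set ↥A) := hN.preimage continuous_subtype_val
  obtain ⟨ε, hε, hpush⟩ := exists_push_down F φ hD lam hP hcrit t hN'
    (fun x hx hxt => hKN ⟨x, ⟨hx, hxt⟩, rfl⟩)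
  refine ⟨ε, hε, fun s hs hsl => ?_⟩
  set B : Set ↥A := {γ | F γ ≤ s ∧ (γ : SphereMaps n X) ∉ N}
  have hBclosed : IsClosed B :=
    (isClosed_le F.continuous continuous_const).inter hN'.isClosed_compl
  have hsub : Subtype.val '' {γ : ↥A | F γ ≤ s} ⊆ Subtype.val '' B ∪ N := by
    rintro _ ⟨γ, hγ, rfl⟩
    by_cases h : (γ : SphereMaps n X) ∈ N
    · exact Or.inr h
    · exact Or.inl ⟨γ, ⟨hγ, h⟩, rfl⟩
  have hBle : SCsub n X (Subtype.val '' B) ≤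
      SCsub n X (Subtype.val '' {γ : ↥A | F γ ≤ t - ε}) := by
    refine (hmono B hBclosed).trans (SCsub_mono (Set.image_mono ?_))
    rintro _ ⟨γ, hγ, rfl⟩
    exact hpush γ (hγ.1.trans hs) (hγ.1.trans hsl) hγ.2
  exact (SCsub_mono hsub).trans ((SCsub_union_le _ _).trans (add_le_add hBle hNle))

/-- Continuous induction: if `g` vanishes far to the left, and near each `t ≤ lam` it exceeds its
value slightly to the left of `t` by at most `k t`, which is no larger than the jump of the
monotone function `h` at `t`, then `g ≤ h` at `lam`. -/
lemma le_of_local_step {g h k : ℝ → ℕ∞} (hh : Monotone h) (lam : ℝ) {c : ℝ}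
    (hc : ∀ s ≤ c, g s = 0)
    (hjump : ∀ t ≤ lam, ∀ r < t, h r + k t ≤ h t)
    (hstep : ∀ t ≤ lam, ∃ ε > 0, ∀ s, s ≤ t + ε → s ≤ lam → g s ≤ g (t - ε) + k t) :
    g lam ≤ h lam := by
  rcases le_or_gt lam c with hlc | hlc
  · simp [hc lam hlc]
  set T : Set ℝ := {t | t ≤ lam ∧ ∀ s ≤ t, g s ≤ h s} with hT
  have hcT : c ∈ T := ⟨hlc.le, fun s hs => by simp [hc s hs]⟩
  have hTb : BddAbove T := ⟨lam, fun t ht => ht.1⟩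
  set τ := sSup T with hτ
  have hτl : τ ≤ lam := csSup_le ⟨c, hcT⟩ fun t ht => ht.1
  obtain ⟨ε, hε, hstepτ⟩ := hstep τ hτl
  have hbelow : ∀ s < τ, g s ≤ h s := fun s hs => by
    obtain ⟨t, ht, hst⟩ := exists_lt_of_lt_csSup ⟨c, hcT⟩ hs
    exact ht.2 s hst.le
  have hmem : min (τ + ε) lam ∈ T := by
    refine ⟨min_le_right _ _, fun s hs => ?_⟩
    rcases lt_or_ge s τ with hsτ | hsτ
    · exact hbelow s hsτ
    · calc g s ≤ g (τ - ε) + k τ :=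
            hstepτ s (hs.trans (min_le_left _ _)) (hs.trans (min_le_right _ _))
        _ ≤ h (τ - ε) + k τ := by
            gcongr
            exact hbelow _ (by linarith)
        _ ≤ h τ := hjump τ hτl _ (by linarith)
        _ ≤ h s := hh hsτ
  have hle : min (τ + ε) lam ≤ τ := le_csSup hTb hmem
  have hlam : min (τ + ε) lam = lam := by
    rcases min_choice (τ + ε) lam with h1 | h1
    · linarith
    · exact h1
  rw [hlam] at hmem
  exact hmem.2 lam le_rfl

/-- Lusternik–Schnirelmann-type estimate for sublevel sets: if `F` is
bounded below, `(F, φ)` satisfies condition (D), and `φ` does not decrease subspace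
spherical complexities of closed sets, then for every `λ`,
`SC_{n,X}(F^λ) ≤ Σ_{μ ≤ λ} SC_{n,X}(Fix φ ∩ F_μ)`. -/
theorem SCsub_sublevel_le_sum {X : Type u} [TopologicalSpace X] [PathConnectedSpace X]
    [TopologicalSpace.MetrizableSpace X] (hX : IsANR X) (n : ℕ) (hn : 1 ≤ n)
    (A : Set (SphereMaps n X)) (F : C(↥A, ℝ)) (φ : C(↥A, ↥A)) (hφ : IsHtpyEquiv φ)
    (hbd : ∃ c : ℝ, ∀ γ : ↥A, c ≤ F γ)
    (hD : CondD ⇑F ⇑φ)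
    (hmono : ∀ B : Set ↥A, IsClosed B →
      SCsub n X (Subtype.val '' B) ≤ SCsub n X (Subtype.val '' (⇑φ '' B)))
    (lam : ℝ) :
    SCsub n X (Subtype.val '' {γ : ↥A | F γ ≤ lam}) ≤
      esum (fun μ : ↥(Set.Iic lam) =>
        SCsub n X (Subtype.val '' {γ : ↥A | φ γ = γ ∧ F γ = (μ : ℝ)})) := by
  classical
  set f : ↥(Set.Iic lam) → ℕ∞ := fun μ =>
    SCsub n X (Subtype.val '' {γ : ↥A | φ γ = γ ∧ F γ = (μ : ℝ)}) with hf
  by_cases htop : esum f = ⊤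
  · rw [htop]
    exact le_top
  have hfinite := finite_support_of_esum_ne_top htop
  set P : Finset ↥(Set.Iic lam) := hfinite.toFinset with hPdef
  have hcrit : ∀ x, φ x = x → F x ≤ lam → F x ∈ (Subtype.val '' (P : Set ↥(Set.Iic lam))) := by
    intro x hx hxl
    refine ⟨⟨F x, hxl⟩, ?_, rfl⟩
    simp only [hPdef, Set.Finite.coe_toFinset, Set.mem_ofPred_eq]
    intro h0
    have hemp := eq_empty_of_SCsub_eq_zero h0
    have hmem : (x : SphereMaps n X) ∈ Subtype.val '' {γ : ↥A | φ γ = γ ∧ F γ = F x} :=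
      ⟨x, ⟨hx, rfl⟩, rfl⟩
    rw [hemp] at hmem
    exact hmem
  obtain ⟨c, hc⟩ := hbd
  have hmain := le_of_local_step
    (g := fun s => SCsub n X (Subtype.val '' {γ : ↥A | F γ ≤ s}))
    (h := fun s => ∑ μ ∈ P with μ.1 ≤ s, f μ)
    (k := fun t => SCsub n X (Subtype.val '' {γ : ↥A | φ γ = γ ∧ F γ = t}))
    (fun s s' hs => Finset.sum_le_sum_of_subset
      (Finset.monotone_filter_right _ fun μ _ hμ => le_trans hμ hs))
    lam (c := c - 1) ?_ ?_ ?_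
  · exact hmain.trans
      (le_iSup (fun s : Finset ↥(Set.Iic lam) => ∑ i ∈ s, f i) (P.filter fun μ => μ.1 ≤ lam))
  · intro s hs
    have : {γ : ↥A | F γ ≤ s} = ∅ := by
      ext γ
      simp only [Set.mem_ofPred_eq, Set.mem_empty_iff_false, iff_false, not_le]
      linarith [hc γ]
    simp [this, SCsub_empty]
  · intro t ht r hr
    change (∑ μ ∈ P with μ.1 ≤ r, f μ) + f ⟨t, ht⟩ ≤ ∑ μ ∈ P with μ.1 ≤ t, f μ
    have hsub : (P.filter fun μ => μ.1 ≤ r) ⊆ P.filter fun μ => μ.1 ≤ t :=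
      Finset.monotone_filter_right _ fun μ _ hμ => le_trans hμ hr.le
    by_cases htP : f ⟨t, ht⟩ = 0
    · rw [htP, add_zero]
      exact Finset.sum_le_sum_of_subset hsub
    · have hnot : (⟨t, ht⟩ : ↥(Set.Iic lam)) ∉ P.filter fun μ => μ.1 ≤ r := by
        simp [hr]
      rw [add_comm, ← Finset.sum_insert hnot]
      refine Finset.sum_le_sum_of_subset (Finset.insert_subset ?_ hsub)
      simp [hPdef, htP]
  · intro t ht
    exact SCsub_local_step A F φ hD hmono lam (P.finite_toSet.image _) hcrit t
      (ne_top_of_esum_ne_top htop ⟨t, ht⟩)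

end
end
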